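/- arXiv:1104.4742 — 8 statements merged into one kernel-verified Lean document; each statement's English description precedes it below -/
import Mathlib

section
/- For all real t ≥ 0, λ > 0, β ≥ 0 and real numbers μℓ, μs, one has ∫₀ᵗ λ·exp(−λv)·((1−exp(−βv))·μℓ + exp(−βv)·μs)·(λ(t−v)+1) dv = μℓ·(λt − 𝔄(t,λ,β)) + μs·𝔄(t,λ,β). -/
open MeasureTheory Real

/-- The quantity 𝔄(t,λ,β) from the paper. -/
noncomputable def frakA (t lam β : ℝ) : ℝ :=
  (lam / (β + lam) ^ 2) * (β - β * Real.exp (-((β + lam) * t)) + (β + lam) * lam * t)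

/-!
The function `𝔄(t, λ, β)` is the integral over `[0, t]` of `λ e^{-(β + λ) v} (λ (t - v) + 1)`, and
it equals `λ t` at `β = 0`. The integrand of the theorem is the combination of these kernels for
the parameters `0` and `β` with coefficients `μℓ` and `μs - μℓ`.
-/

theorem hasDerivAt_exp_mul_affine {c : ℝ} (hc : c ≠ 0) (p q x : ℝ) :
    HasDerivAt (fun x ↦ exp (c * x) * ((p * x + q) / c - p / c ^ 2))
      (exp (c * x) * (p * x + q)) x := by
  have hexp : HasDerivAt (fun x ↦ exp (c * x)) (exp (c * x) * c) x :=
    (hasDerivAt_const_mul c).exp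
  have haffine : HasDerivAt (fun x ↦ (p * x + q) / c - p / c ^ 2) (p / c) x :=
    (((hasDerivAt_const_mul p).add_const q).div_const c).sub_const _
  refine (hexp.mul haffine).congr_deriv ?_
  field_simp
  ring

theorem integral_exp_mul_affine {c : ℝ} (hc : c ≠ 0) (p q a b : ℝ) :
    ∫ x in a..b, exp (c * x) * (p * x + q) =
      exp (c * b) * ((p * b + q) / c - p / c ^ 2) -
        exp (c * a) * ((p * a + q) / c - p / c ^ 2) :=
  intervalIntegral.integral_eq_sub_of_hasDerivAt
    (fun x _ ↦ hasDerivAt_exp_mul_affine hc p q x)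
    (Continuous.intervalIntegrable (by fun_prop) _ _)

theorem integral_exp_kernel_eq_frakA {lam β : ℝ} (hc : β + lam ≠ 0) (t : ℝ) :
    ∫ v in (0 : ℝ)..t, lam * exp (-((β + lam) * v)) * (lam * (t - v) + 1) = frakA t lam β := by
  have integrand_eq (v : ℝ) : lam * exp (-((β + lam) * v)) * (lam * (t - v) + 1) =
      lam * (exp (-(β + lam) * v) * (-lam * v + (lam * t + 1))) := by
    rw [neg_mul]
    ring
  simp only [integrand_eq]
  rw [intervalIntegral.integral_const_mul, integral_exp_mul_affine (neg_ne_zero.mpr hc)]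
  simp only [frakA, neg_mul, mul_zero, exp_zero]
  field_simp
  ring

theorem frakA_zero_right (t lam : ℝ) : frakA t lam 0 = lam * t := by
  rcases eq_or_ne lam 0 with rfl | hlam
  · simp [frakA]
  · simp only [frakA, zero_mul, zero_add, sub_zero]
    field_simp

theorem integral_exp_kernel_eq_mul (t lam : ℝ) :
    ∫ v in (0 : ℝ)..t, lam * exp (-(lam * v)) * (lam * (t - v) + 1) = lam * t := by
  rcases eq_or_ne lam 0 with rfl | hlam
  · simp
  · simpa only [zero_add, frakA_zero_right] using
      integral_exp_kernel_eq_frakA (β := 0) (by simpa using hlam) t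

theorem stmt_1_general (t lam β μl μs : ℝ) (hc : β + lam ≠ 0) :
    ∫ v in (0 : ℝ)..t,
        lam * exp (-(lam * v)) * ((1 - exp (-(β * v))) * μl + exp (-(β * v)) * μs) *
          (lam * (t - v) + 1) =
      μl * (lam * t - frakA t lam β) + μs * frakA t lam β := by
  have integrand_eq (v : ℝ) :
      lam * exp (-(lam * v)) * ((1 - exp (-(β * v))) * μl + exp (-(β * v)) * μs) *
          (lam * (t - v) + 1) =
        μl * (lam * exp (-(lam * v)) * (lam * (t - v) + 1)) +
          (μs - μl) * (lam * exp (-((β + lam) * v)) * (lam * (t - v) + 1)) := by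
    rw [add_mul, neg_add, exp_add]
    ring
  simp only [integrand_eq]
  rw [intervalIntegral.integral_add (Continuous.intervalIntegrable (by fun_prop) _ _)
      (Continuous.intervalIntegrable (by fun_prop) _ _),
    intervalIntegral.integral_const_mul, intervalIntegral.integral_const_mul,
    integral_exp_kernel_eq_mul, integral_exp_kernel_eq_frakA hc]
  ring

theorem stmt_1 (t lam β μl μs : ℝ) (ht : 0 ≤ t) (hlam : 0 < lam) (hβ : 0 ≤ β) :
    ∫ v in (0:ℝ)..t,
        lam * Real.exp (-(lam * v)) *
          ((1 - Real.exp (-(β * v))) * μl + Real.exp (-(β * v)) * μs) *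
          (lam * (t - v) + 1)
      = μl * (lam * t - frakA t lam β) + μs * frakA t lam β :=
  stmt_1_general t lam β μl μs (add_pos_of_nonneg_of_pos hβ hlam).ne'
end

section
/- Let L be a Borel probability measure on (0,∞) with ∫ λ dL(λ) < ∞, let β ≥ 0, and let μℓ, μs ≥ 0 be real numbers. Then the limit as t → ∞ of (1/t)·( μℓ·∫ (λt − 𝔄(t,λ,β)) dL(λ) + μs·∫ 𝔄(t,λ,β) dL(λ) ) exists and equals μℓ·∫ (β/(β+λ))·λ dL(λ) + μs·∫ (λ/(β+λ))·λ dL(λ). -/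
open MeasureTheory Real Filter

/-!
For `s = β + λ > 0` one has `λt - 𝔄(t,λ,β) = (λβ/s²)(exp(-st) - 1 + st)`. Since `exp x ≥ 1 + x`,
this gives `0 ≤ 𝔄(t,λ,β) ≤ λt`, so after division by `t` both integrands are dominated by `λ`,
uniformly in `t`. Pointwise they converge to the linear coefficients `(β/s)λ` and `(λ/s)λ`, because
`exp(-st)` stays bounded, and dominated convergence concludes.
-/

theorem tendsto_inv_smul_integral_of_norm_le_mul {α E : Type*} [MeasurableSpace α]
    [NormedAddCommGroup E] [NormedSpace ℝ E] {μ : Measure α} {f : ℝ → α → E} {F : α → E}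
    {bound : α → ℝ} (hf : ∀ᶠ t in atTop, AEStronglyMeasurable (f t) μ)
    (hbound : Integrable bound μ) (hle : ∀ᶠ t in atTop, ∀ᵐ a ∂μ, ‖f t a‖ ≤ bound a * t)
    (hlim : ∀ᵐ a ∂μ, Tendsto (fun t => t⁻¹ • f t a) atTop (nhds (F a))) :
    Tendsto (fun t => t⁻¹ • ∫ a, f t a ∂μ) atTop (nhds (∫ a, F a ∂μ)) := by
  simp only [← integral_smul]
  refine tendsto_integral_filter_of_dominated_convergence bound
    (hf.mono fun t ht => ht.const_smul t⁻¹) ?_ hbound hlim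
  filter_upwards [hle, eventually_gt_atTop 0] with t hle ht
  filter_upwards [hle] with a ha
  rwa [norm_smul, norm_inv, Real.norm_of_nonneg ht.le, inv_mul_le_iff₀' ht]

section Pointwise

variable {t lam β : ℝ}

theorem measurable_frakA (t β : ℝ) : Measurable fun lam => frakA t lam β := by
  unfold frakA
  fun_prop

theorem mul_sub_frakA_eq (h : β + lam ≠ 0) :
    lam * t - frakA t lam β =
      lam * β / (β + lam) ^ 2 * (exp (-((β + lam) * t)) - 1 + (β + lam) * t) := by
  unfold frakA
  field_simp
  ring

theorem frakA_nonneg (ht : 0 ≤ t) (hlam : 0 ≤ lam) (hβ : 0 ≤ β) : 0 ≤ frakA t lam β := by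
  have hexp : exp (-((β + lam) * t)) ≤ 1 :=
    exp_le_one_iff.mpr (neg_nonpos.mpr (by positivity))
  have hdiff : 0 ≤ β - β * exp (-((β + lam) * t)) :=
    sub_nonneg.mpr (mul_le_of_le_one_right hβ hexp)
  unfold frakA
  positivity

theorem frakA_le_mul (hlam : 0 ≤ lam) (hβ : 0 ≤ β) : frakA t lam β ≤ lam * t := by
  rcases hlam.eq_or_lt with rfl | hlam
  · simp [frakA]
  have hexp : 0 ≤ exp (-((β + lam) * t)) - 1 + (β + lam) * t := by
    linarith [add_one_le_exp (-((β + lam) * t))]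
  rw [← sub_nonneg, mul_sub_frakA_eq (by positivity)]
  positivity

theorem tendsto_inv_mul_frakA (h : 0 < β + lam) :
    Tendsto (fun t => t⁻¹ * frakA t lam β) atTop (nhds (lam / (β + lam) * lam)) := by
  have hexp : Tendsto (fun t => exp (-((β + lam) * t))) atTop (nhds 0) :=
    tendsto_exp_neg_atTop_nhds_zero.comp (tendsto_id.const_mul_atTop h)
  have hsublinear : Tendsto (fun t => t⁻¹ * (β - β * exp (-((β + lam) * t)))) atTop (nhds 0) := by
    simpa only [zero_mul] using tendsto_inv_atTop_zero.mul ((hexp.const_mul β).const_sub β)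
  have hlim := (hsublinear.add_const ((β + lam) * lam)).const_mul (lam / (β + lam) ^ 2)
  have hvalue : lam / (β + lam) ^ 2 * (0 + (β + lam) * lam) = lam / (β + lam) * lam := by
    field_simp
    ring
  rw [hvalue] at hlim
  refine hlim.congr' ?_
  filter_upwards [eventually_ne_atTop 0] with t ht
  unfold frakA
  field_simp

theorem tendsto_inv_mul_mul_sub_frakA (h : 0 < β + lam) :
    Tendsto (fun t => t⁻¹ * (lam * t - frakA t lam β)) atTop (nhds (β / (β + lam) * lam)) := by
  have hvalue : lam - lam / (β + lam) * lam = β / (β + lam) * lam := by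
    field_simp
    ring
  rw [← hvalue]
  refine ((tendsto_inv_mul_frakA h).const_sub lam).congr' ?_
  filter_upwards [eventually_ne_atTop 0] with t ht
  field_simp

end Pointwise

section Integral

variable {L : Measure ℝ} {β : ℝ}

theorem tendsto_inv_mul_integral_frakA (hpos : ∀ᵐ lam ∂L, 0 < lam)
    (hint : Integrable (fun lam : ℝ => lam) L) (hβ : 0 ≤ β) :
    Tendsto (fun t => t⁻¹ * ∫ lam, frakA t lam β ∂L) atTop
      (nhds (∫ lam, lam / (β + lam) * lam ∂L)) := by
  refine tendsto_inv_smul_integral_of_norm_le_mul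
    (.of_forall fun t => (measurable_frakA t β).aestronglyMeasurable) hint ?_
    (hpos.mono fun lam hlam => tendsto_inv_mul_frakA (by positivity))
  filter_upwards [eventually_ge_atTop 0] with t ht
  filter_upwards [hpos] with lam hlam
  rw [Real.norm_of_nonneg (frakA_nonneg ht hlam.le hβ)]
  exact frakA_le_mul hlam.le hβ

theorem tendsto_inv_mul_integral_mul_sub_frakA (hpos : ∀ᵐ lam ∂L, 0 < lam)
    (hint : Integrable (fun lam : ℝ => lam) L) (hβ : 0 ≤ β) :
    Tendsto (fun t => t⁻¹ * ∫ lam, (lam * t - frakA t lam β) ∂L) atTop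
      (nhds (∫ lam, β / (β + lam) * lam ∂L)) := by
  refine tendsto_inv_smul_integral_of_norm_le_mul
    (.of_forall fun t =>
      ((measurable_id.mul_const t).sub (measurable_frakA t β)).aestronglyMeasurable) hint ?_
    (hpos.mono fun lam hlam => tendsto_inv_mul_mul_sub_frakA (by positivity))
  filter_upwards [eventually_ge_atTop 0] with t ht
  filter_upwards [hpos] with lam hlam
  rw [Real.norm_of_nonneg (sub_nonneg.mpr (frakA_le_mul hlam.le hβ))]
  exact sub_le_self _ (frakA_nonneg ht hlam.le hβ)

theorem stmt_3_general (hpos : ∀ᵐ lam ∂L, 0 < lam)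
    (hint : Integrable (fun lam : ℝ => lam) L) (hβ : 0 ≤ β) (μl μs : ℝ) :
    Tendsto
      (fun t : ℝ =>
        (1 / t) *
          (μl * ∫ lam, (lam * t - frakA t lam β) ∂L + μs * ∫ lam, frakA t lam β ∂L))
      atTop
      (nhds
        (μl * ∫ lam, (β / (β + lam)) * lam ∂L + μs * ∫ lam, (lam / (β + lam)) * lam ∂L)) :=
  (((tendsto_inv_mul_integral_mul_sub_frakA hpos hint hβ).const_mul μl).add
    ((tendsto_inv_mul_integral_frakA hpos hint hβ).const_mul μs)).congr fun t => by ring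

end Integral

theorem stmt_3 (L : Measure ℝ) [IsProbabilityMeasure L] (hsupp : L (Set.Iic 0) = 0)
    (hint : Integrable (fun lam : ℝ => lam) L)
    (β μl μs : ℝ) (hβ : 0 ≤ β) (hμl : 0 ≤ μl) (hμs : 0 ≤ μs) :
    Tendsto
      (fun t : ℝ =>
        (1 / t) *
          (μl * ∫ lam, (lam * t - frakA t lam β) ∂L + μs * ∫ lam, frakA t lam β ∂L))
      atTop
      (nhds
        (μl * ∫ lam, (β / (β + lam)) * lam ∂L + μs * ∫ lam, (lam / (β + lam)) * lam ∂L)) := by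
  have hpos : ∀ᵐ lam ∂L, 0 < lam := by
    simpa only [Set.mem_Iic, not_le] using measure_eq_zero_iff_ae_notMem.mp hsupp
  exact stmt_3_general hpos hint hβ μl μs
end

section
/- For all real t ≥ 0, λ > 0 and β ≥ 0, one has 𝔅(t,λ,β,β) = 2βλ²(β−2λ)/(β+λ)⁴ + 4tβλ³/(β+λ)³ + t²λ⁴/(β+λ)² − (2βλ²·(−2λ + β·(1 + t(β+λ)))/(β+λ)⁴)·exp(−t(β+λ)). -/
open MeasureTheory Real

/-- The quantity 𝔅(t,λ,Θ,Δ) from the paper. -/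
noncomputable def frakB (t lam Θ Δ : ℝ) : ℝ :=
  lam ^ 2 *
    ∫ y in (0:ℝ)..t,
      Real.exp (-((lam + Θ) * y)) *
        ∫ v in (0:ℝ)..(t - y),
          Real.exp (-((lam + Δ) * v)) * ((lam * (t - y - v) + 2) ^ 2 - 2)

/-!
For `Θ = Δ` the two exponentials in `frakB` merge: with `s = y + v`, the double integral is that of
a function of `s` alone over the triangle `0 ≤ y ≤ s ≤ t`, and integrating out `y` leaves a factor
`s`. What remains is a polynomial of degree three against an exponential, which repeated
integration by parts evaluates.
-/

theorem integral_integral_right_eq_integral_sub_mul {f : ℝ → ℝ} {a b : ℝ}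
    (hf : IntervalIntegrable f volume a b) :
    ∫ y in a..b, ∫ s in y..b, f s = ∫ s in a..b, (s - a) * f s := by
  have ac_integral : AbsolutelyContinuousOnInterval (fun y ↦ ∫ s in b..y, f s) a b :=
    hf.absolutelyContinuousOnInterval_intervalIntegral Set.right_mem_uIcc
  have ac_sub : AbsolutelyContinuousOnInterval (fun y ↦ y - a) a b :=
    (LipschitzWith.id.sub (LipschitzWith.const a)).lipschitzOnWith.absolutelyContinuousOnInterval
  have ae_deriv_integral : ∀ᵐ y, y ∈ Set.uIoc a b → deriv (fun y ↦ ∫ s in b..y, f s) y = f y := by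
    filter_upwards [hf.ae_hasDerivAt_integral] with y hy hyab
    exact (hy (Set.uIoc_subset_uIcc hyab) b Set.right_mem_uIcc).deriv
  have by_parts := ac_sub.integral_mul_deriv_eq_deriv_mul ac_integral
  simp only [deriv_sub_const, deriv_id'', one_mul, intervalIntegral.integral_same, mul_zero,
    sub_self, zero_mul, zero_sub] at by_parts
  calc ∫ y in a..b, ∫ s in y..b, f s
      = -∫ y in a..b, ∫ s in b..y, f s := by
        rw [← intervalIntegral.integral_neg]
        simp only [← intervalIntegral.integral_symm]
    _ = ∫ s in a..b, (s - a) * deriv (fun y ↦ ∫ s in b..y, f s) s := by_parts.symm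
    _ = ∫ s in a..b, (s - a) * f s := by
        refine intervalIntegral.integral_congr_ae ?_
        filter_upwards [ae_deriv_integral] with s hs hsab
        rw [hs hsab]

theorem exp_neg_mul_mul_integral_exp_neg_mul (a t y : ℝ) (g : ℝ → ℝ) :
    exp (-(a * y)) * ∫ v in 0..(t - y), exp (-(a * v)) * g (t - y - v) =
      ∫ s in y..t, exp (-(a * s)) * g (t - s) := by
  calc exp (-(a * y)) * ∫ v in 0..(t - y), exp (-(a * v)) * g (t - y - v)
      = ∫ v in 0..(t - y), exp (-(a * (y + v))) * g (t - (y + v)) := by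
        rw [← intervalIntegral.integral_const_mul]
        simp only [mul_add, neg_add, exp_add, mul_assoc, sub_sub]
    _ = ∫ s in y..t, exp (-(a * s)) * g (t - s) := by
        rw [intervalIntegral.integral_comp_add_left (fun s ↦ exp (-(a * s)) * g (t - s)),
          add_zero, add_sub_cancel]

theorem integral_exp_neg_mul_mul_integral_exp_neg_mul (a : ℝ) {t : ℝ} {g : ℝ → ℝ}
    (hg : IntervalIntegrable g volume 0 t) :
    ∫ y in 0..t, exp (-(a * y)) * ∫ v in 0..(t - y), exp (-(a * v)) * g (t - y - v) =
      ∫ s in 0..t, exp (-(a * s)) * (s * g (t - s)) := by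
  have hg_reflect : IntervalIntegrable (fun s ↦ g (t - s)) volume 0 t := by
    simpa using (hg.comp_sub_left t).symm
  have h_int : IntervalIntegrable (fun s ↦ exp (-(a * s)) * g (t - s)) volume 0 t :=
    hg_reflect.continuousOn_mul (by fun_prop)
  simp only [exp_neg_mul_mul_integral_exp_neg_mul,
    integral_integral_right_eq_integral_sub_mul h_int, sub_zero, mul_left_comm]

section ExpMulPolynomial

open Polynomial

variable {a : ℝ}

theorem integral_exp_neg_mul_mul_of_hasDerivAt (ha : a ≠ 0) {b c : ℝ} {f f' : ℝ → ℝ}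
    (hf : ∀ x ∈ Set.uIcc b c, HasDerivAt f (f' x) x) (hf' : IntervalIntegrable f' volume b c) :
    ∫ x in b..c, exp (-(a * x)) * f x =
      (exp (-(a * b)) * f b - exp (-(a * c)) * f c) / a +
        (∫ x in b..c, exp (-(a * x)) * f' x) / a := by
  have hasDerivAt_exp (x : ℝ) : HasDerivAt (fun x ↦ -exp (-(a * x)) / a) (exp (-(a * x))) x := by
    refine ((hasDerivAt_id' x).const_mul a).fun_neg.exp.fun_neg.div_const a |>.congr_deriv ?_
    field_simp
  have exp_integrable : IntervalIntegrable (fun x ↦ exp (-(a * x))) volume b c :=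
    Continuous.intervalIntegrable (by fun_prop) b c
  calc ∫ x in b..c, exp (-(a * x)) * f x
      = f c * (-exp (-(a * c)) / a) - f b * (-exp (-(a * b)) / a) -
          ∫ x in b..c, f' x * (-exp (-(a * x)) / a) := by
        rw [← intervalIntegral.integral_mul_deriv_eq_deriv_mul hf (fun x _ ↦ hasDerivAt_exp x)
          hf' exp_integrable]
        simp only [mul_comm]
    _ = (exp (-(a * b)) * f b - exp (-(a * c)) * f c) / a +
          (∫ x in b..c, exp (-(a * x)) * f' x) / a := by
        simp only [mul_comm (f' _), neg_div, neg_mul, div_mul_eq_mul_div,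
          intervalIntegral.integral_neg, intervalIntegral.integral_div]
        ring

theorem integral_exp_neg_mul_mul_eval (ha : a ≠ 0) (b c : ℝ) {n : ℕ} {p : ℝ[X]}
    (hp : derivative^[n] p = 0) :
    ∫ x in b..c, exp (-(a * x)) * p.eval x =
      ∑ k ∈ Finset.range n, (exp (-(a * b)) * (derivative^[k] p).eval b -
        exp (-(a * c)) * (derivative^[k] p).eval c) / a ^ (k + 1) := by
  induction n generalizing p with
  | zero => simp [show p = 0 from hp]
  | succ n ih =>
    rw [integral_exp_neg_mul_mul_of_hasDerivAt ha (fun x _ ↦ p.hasDerivAt x)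
      (p.derivative.continuous.intervalIntegrable b c), ih hp, Finset.sum_range_succ',
      Finset.sum_div, add_comm]
    simp only [Function.iterate_succ_apply, Function.iterate_zero_apply, zero_add, pow_one,
      div_div, ← pow_succ]

theorem integral_exp_neg_mul_mul_quadratic (ha : a ≠ 0) (c₀ c₁ c₂ t : ℝ) :
    ∫ s in 0..t, exp (-(a * s)) * (s * (c₂ * (t - s) ^ 2 + c₁ * (t - s) + c₀)) =
      (c₂ * t ^ 2 + c₁ * t + c₀) / a ^ 2 - 2 * (2 * c₂ * t + c₁) / a ^ 3 + 6 * c₂ / a ^ 4 -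
        exp (-(a * t)) * (c₀ * t / a + (c₀ - c₁ * t) / a ^ 2 +
          2 * (c₂ * t - c₁) / a ^ 3 + 6 * c₂ / a ^ 4) := by
  let p : ℝ[X] := X * (C c₂ * (C t - X) ^ 2 + C c₁ * (C t - X) + C c₀)
  have eval_p (s : ℝ) : p.eval s = s * (c₂ * (t - s) ^ 2 + c₁ * (t - s) + c₀) := by simp [p]
  have eval_deriv_one (s : ℝ) : (derivative^[1] p).eval s =
      c₂ * (t - s) ^ 2 + c₁ * (t - s) + c₀ - s * (2 * c₂ * (t - s) + c₁) := by
    simp [p, derivative_pow]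
    ring
  have eval_deriv_two (s : ℝ) : (derivative^[2] p).eval s =
      2 * c₂ * s - 2 * (2 * c₂ * (t - s) + c₁) := by
    simp [p, derivative_pow]
    ring
  have eval_deriv_three (s : ℝ) : (derivative^[3] p).eval s = 6 * c₂ := by
    simp [p, derivative_pow]
    ring
  have deriv_four : derivative^[4] p = 0 := by
    refine iterate_derivative_eq_zero (Nat.lt_succ_of_le ?_)
    unfold p
    compute_degree
  simp only [← eval_p, integral_exp_neg_mul_mul_eval ha 0 t deriv_four, Finset.sum_range_succ,
    Finset.sum_range_zero, Function.iterate_zero_apply, eval_deriv_one, eval_deriv_two,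
    eval_deriv_three]
  simp only [eval_p, mul_zero, neg_zero, exp_zero]
  ring

end ExpMulPolynomial

theorem frakB_self (t lam β : ℝ) :
    frakB t lam β β = lam ^ 2 * ∫ s in 0..t, exp (-((lam + β) * s)) *
      (s * (lam ^ 2 * (t - s) ^ 2 + 4 * lam * (t - s) + 2)) := by
  have expand_square (x : ℝ) : (lam * x + 2) ^ 2 - 2 = lam ^ 2 * x ^ 2 + 4 * lam * x + 2 := by ring
  simp only [frakB, expand_square]
  rw [integral_exp_neg_mul_mul_integral_exp_neg_mul (lam + β)
    (g := fun x ↦ lam ^ 2 * x ^ 2 + 4 * lam * x + 2)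
    (Continuous.intervalIntegrable (by fun_prop) 0 t)]

theorem stmt_5_general (t : ℝ) {lam β : ℝ} (hne : β + lam ≠ 0) :
    frakB t lam β β
      = 2 * β * lam ^ 2 * (β - 2 * lam) / (β + lam) ^ 4
        + 4 * t * β * lam ^ 3 / (β + lam) ^ 3
        + t ^ 2 * lam ^ 4 / (β + lam) ^ 2
        - (2 * β * lam ^ 2 * (-(2 * lam) + β * (1 + t * (β + lam))) / (β + lam) ^ 4) *
            Real.exp (-(t * (β + lam))) := by
  obtain ⟨a, rfl⟩ : ∃ a, β = a - lam := ⟨β + lam, (add_sub_cancel_right β lam).symm⟩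
  rw [sub_add_cancel] at hne
  rw [frakB_self, add_sub_cancel, integral_exp_neg_mul_mul_quadratic hne, sub_add_cancel,
    mul_comm t a]
  field_simp
  ring

theorem stmt_5 (t lam β : ℝ) (ht : 0 ≤ t) (hlam : 0 < lam) (hβ : 0 ≤ β) :
    frakB t lam β β
      = 2 * β * lam ^ 2 * (β - 2 * lam) / (β + lam) ^ 4
        + 4 * t * β * lam ^ 3 / (β + lam) ^ 3
        + t ^ 2 * lam ^ 4 / (β + lam) ^ 2
        - (2 * β * lam ^ 2 * (-(2 * lam) + β * (1 + t * (β + lam))) / (β + lam) ^ 4) *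
            Real.exp (-(t * (β + lam))) :=
  stmt_5_general t (by positivity)
end

section
/- For all real t ≥ 0, λ > 0 and β ≥ 0, one has 𝔅(t,λ,0,β) = −2βλ²/(β+λ)³ + 2tβλ²/(β+λ)² + t²λ³/(β+λ) + (2βλ²/(β+λ)³)·exp(−t(β+λ)). -/
open MeasureTheory Real

/-! Convolution with `exp (-(a * ·))` on `[0, t]` inverts the operator `D + a` among functions
vanishing at `0`, so `𝔅(t,λ,0,β) / λ²` is the solution `K` of
`(D + (λ + β)) (D + λ) K = (λ x + 2)² - 2` with vanishing initial data. The two operators commute,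
and `q x = λ x² + 2 x` satisfies `(D + λ) q = (λ x + 2)² - 2`; hence `K` already solves the
first-order equation `(D + (λ + β)) K = q`, whose solution is elementary. -/

section Duhamel

variable {E : Type*} [NormedAddCommGroup E] [NormedSpace ℝ E] [CompleteSpace E]

theorem integral_exp_neg_smul_comp_sub {f F : ℝ → E} {a t : ℝ}
    (hF : ∀ x ∈ Set.uIcc 0 t, HasDerivAt F (f x - a • F x) x)
    (hf : IntervalIntegrable f volume 0 t) :
    ∫ v in (0 : ℝ)..t, exp (-(a * v)) • f (t - v) = F t - exp (-(a * t)) • F 0 := by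
  have hderiv : ∀ v ∈ Set.uIcc 0 t,
      HasDerivAt (fun v ↦ -(exp (-(a * v)) • F (t - v))) (exp (-(a * v)) • f (t - v)) v := by
    intro v hv
    have hmem : t - v ∈ Set.uIcc 0 t := by
      simpa [Set.uIcc_comm] using Set.mem_image_of_mem (t - ·) hv
    have hexp : HasDerivAt (fun v ↦ exp (-(a * v))) (exp (-(a * v)) * -(a * 1)) v :=
      ((hasDerivAt_id v).const_mul a).neg.exp
    refine (hexp.smul ((hF _ hmem).comp_const_sub t v)).neg.congr_deriv ?_
    module
  have hint : IntervalIntegrable (fun v ↦ exp (-(a * v)) • f (t - v)) volume 0 t := by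
    refine IntervalIntegrable.continuousOn_smul ?_ (by fun_prop)
    simpa using (hf.comp_sub_left t).symm
  rw [intervalIntegral.integral_eq_sub_of_hasDerivAt hderiv hint]
  simp [neg_add_eq_sub]

theorem integral_exp_neg_smul_integral_exp_neg_smul {f q K : ℝ → E} {a b : ℝ}
    (hf : Continuous f)
    (hq : ∀ x, HasDerivAt q (f x - b • q x) x) (hq₀ : q 0 = 0)
    (hK : ∀ x, HasDerivAt K (q x - a • K x) x) (hK₀ : K 0 = 0) (t : ℝ) :
    ∫ y in (0 : ℝ)..t, exp (-(b * y)) • ∫ v in (0 : ℝ)..(t - y), exp (-(a * v)) • f (t - y - v)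
      = K t := by
  -- `J = (D + b) K`, written without derivatives by means of `(D + a) K = q`.
  let J : ℝ → E := fun x ↦ q x + (b - a) • K x
  have hJ : ∀ x, HasDerivAt J (f x - a • J x) x := fun x ↦
    ((hq x).add ((hK x).const_smul (b - a))).congr_deriv (by module)
  have hKJ : ∀ x, HasDerivAt K (J x - b • K x) x := fun x ↦ (hK x).congr_deriv (by module)
  have hJ_cont : Continuous J := continuous_iff_continuousAt.2 fun x ↦ (hJ x).continuousAt
  have inner (s : ℝ) : ∫ v in (0 : ℝ)..s, exp (-(a * v)) • f (s - v) = J s := by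
    rw [integral_exp_neg_smul_comp_sub (fun x _ ↦ hJ x) (hf.intervalIntegrable _ _)]
    simp [J, hq₀, hK₀]
  simp_rw [inner]
  rw [integral_exp_neg_smul_comp_sub (fun x _ ↦ hKJ x) (hJ_cont.intervalIntegrable _ _), hK₀,
    smul_zero, sub_zero]

end Duhamel

/-- The solution `K` of `K' + a K = b x² + c x` with `K 0 = 0`, for a rate `a ≠ 0`. -/
noncomputable def quadraticResponse (a b c x : ℝ) : ℝ :=
  b * x ^ 2 / a + (a * c - 2 * b) / a ^ 2 * (x - (1 - exp (-(a * x))) / a)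

theorem quadraticResponse_zero (a b c : ℝ) : quadraticResponse a b c 0 = 0 := by
  simp [quadraticResponse]

theorem hasDerivAt_quadraticResponse {a : ℝ} (ha : a ≠ 0) (b c x : ℝ) :
    HasDerivAt (quadraticResponse a b c)
      (b * x ^ 2 + c * x - a * quadraticResponse a b c x) x := by
  have hsq : HasDerivAt (fun x ↦ b * x ^ 2 / a) (b * (2 * x) / a) x := by
    simpa using ((hasDerivAt_pow 2 x).const_mul b).div_const a
  have hexp : HasDerivAt (fun x ↦ exp (-(a * x))) (exp (-(a * x)) * -(a * 1)) x :=
    ((hasDerivAt_id x).const_mul a).neg.exp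
  refine (hsq.add (((hasDerivAt_id x).sub ((hexp.const_sub 1).div_const a)).const_mul
    ((a * c - 2 * b) / a ^ 2))).congr_deriv ?_
  simp only [quadraticResponse]
  field_simp
  ring

theorem frakB_zero_eq_quadraticResponse {lam β : ℝ} (h : β + lam ≠ 0) (t : ℝ) :
    frakB t lam 0 β = lam ^ 2 * quadraticResponse (β + lam) lam 2 t := by
  have hq (x : ℝ) : HasDerivAt (fun x ↦ lam * x ^ 2 + 2 * x)
      ((lam * x + 2) ^ 2 - 2 - lam * (lam * x ^ 2 + 2 * x)) x := by
    refine (((hasDerivAt_pow 2 x).const_mul lam).add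
      ((hasDerivAt_id x).const_mul 2)).congr_deriv ?_
    push_cast
    ring
  have hK := integral_exp_neg_smul_integral_exp_neg_smul (by fun_prop) hq (by simp)
    (hasDerivAt_quadraticResponse h lam 2) (quadraticResponse_zero _ _ _) t
  simp only [smul_eq_mul] at hK
  rw [frakB, add_zero, add_comm lam β, hK]

theorem stmt_6_general (t lam β : ℝ) (h : β + lam ≠ 0) :
    frakB t lam 0 β
      = -(2 * β * lam ^ 2 / (β + lam) ^ 3)
        + 2 * t * β * lam ^ 2 / (β + lam) ^ 2
        + t ^ 2 * lam ^ 3 / (β + lam)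
        + (2 * β * lam ^ 2 / (β + lam) ^ 3) * Real.exp (-(t * (β + lam))) := by
  rw [frakB_zero_eq_quadraticResponse h, quadraticResponse, mul_comm (β + lam) t]
  field_simp
  ring

theorem stmt_6 (t lam β : ℝ) (ht : 0 ≤ t) (hlam : 0 < lam) (hβ : 0 ≤ β) :
    frakB t lam 0 β
      = -(2 * β * lam ^ 2 / (β + lam) ^ 3)
        + 2 * t * β * lam ^ 2 / (β + lam) ^ 2
        + t ^ 2 * lam ^ 3 / (β + lam)
        + (2 * β * lam ^ 2 / (β + lam) ^ 3) * Real.exp (-(t * (β + lam))) :=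
  stmt_6_general t lam β (by positivity)
end

section
/- For all real t ≥ 0, λ ∈ ℝ, Θ ∈ ℝ and Δ ∈ ℝ, one has 𝔅(t,λ,Θ,Δ) = 𝔅(t,λ,Δ,Θ). -/
open MeasureTheory Real

/-!
Both iterated integrals run over the triangle `0 < y`, `0 < v`, `y + v ≤ t`, which is invariant
under exchanging `y` and `v`, and the weight `(λ(t - y - v) + 2)² - 2` depends on `y + v` only. So
exchanging the variables exchanges `Θ` and `Δ`. For `t < 0` the reflection `(y, v) ↦ (-y, -v)`
changes the orientation of both integrals and thus reduces to `t > 0`.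
-/

section CornerTriangle

/-- The right triangle with legs of length `t` along the coordinate axes: the domain of the double
integrals `∫ y in 0..t, ∫ v in 0..t - y`. The legs are excluded and the hypotenuse is included, to
match the `Set.Ioc` convention of interval integrals, which matters for measures with atoms. -/
def cornerTriangle (t : ℝ) : Set (ℝ × ℝ) :=
  {p | 0 < p.1 ∧ 0 < p.2 ∧ p.1 + p.2 ≤ t}

theorem measurableSet_cornerTriangle (t : ℝ) : MeasurableSet (cornerTriangle t) :=
  (measurableSet_lt measurable_const measurable_fst).inter <|
    (measurableSet_lt measurable_const measurable_snd).inter <|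
      measurableSet_le (measurable_fst.add measurable_snd) measurable_const

theorem cornerTriangle_subset_Icc_prod_Icc (t : ℝ) :
    cornerTriangle t ⊆ Set.Icc 0 t ×ˢ Set.Icc 0 t := by
  rintro ⟨y, v⟩ ⟨hy, hv, hyv⟩
  dsimp only at hy hv hyv
  exact ⟨⟨hy.le, by linarith⟩, hv.le, by linarith⟩

theorem swap_preimage_cornerTriangle (t : ℝ) :
    Prod.swap ⁻¹' cornerTriangle t = cornerTriangle t := by
  ext ⟨y, v⟩
  simp only [cornerTriangle, Set.mem_preimage, Set.mem_ofPred_eq, Prod.swap_prod_mk, add_comm v y,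
    and_left_comm]

theorem prodMk_preimage_cornerTriangle_of_pos (t : ℝ) {y : ℝ} (hy : 0 < y) :
    Prod.mk y ⁻¹' cornerTriangle t = Set.Ioc 0 (t - y) := by
  ext v
  simp only [cornerTriangle, Set.mem_preimage, Set.mem_ofPred_eq, Set.mem_Ioc, hy, true_and,
    le_sub_iff_add_le']

theorem prodMk_preimage_cornerTriangle_of_notMem {t y : ℝ} (hy : y ∉ Set.Ioc 0 t) :
    Prod.mk y ⁻¹' cornerTriangle t = ∅ := by
  refine Set.eq_empty_of_forall_notMem fun v hv => hy ⟨hv.1, ?_⟩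
  obtain ⟨-, hv, hyv⟩ := hv
  dsimp only at hv hyv
  linarith

variable {E : Type*} [NormedAddCommGroup E] [NormedSpace ℝ E] {μ ν : Measure ℝ} {t : ℝ}
  {f : ℝ → ℝ → E}

theorem setIntegral_cornerTriangle [SFinite μ] [SFinite ν] (ht : 0 ≤ t)
    (hf : IntegrableOn (Function.uncurry f) (cornerTriangle t) (μ.prod ν)) :
    ∫ p in cornerTriangle t, f p.1 p.2 ∂μ.prod ν =
      ∫ y in (0:ℝ)..t, ∫ v in (0:ℝ)..(t - y), f y v ∂ν ∂μ := by
  have hT := measurableSet_cornerTriangle t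
  have section_integral (y : ℝ) :
      ∫ v, (cornerTriangle t).indicator (Function.uncurry f) (y, v) ∂ν =
        ∫ v in Prod.mk y ⁻¹' cornerTriangle t, f y v ∂ν :=
    integral_indicator (f := f y) (measurable_prodMk_left hT)
  calc ∫ p in cornerTriangle t, f p.1 p.2 ∂μ.prod ν
      = ∫ y, ∫ v in Prod.mk y ⁻¹' cornerTriangle t, f y v ∂ν ∂μ := by
        simp only [← section_integral]
        rw [← integral_prod _ (hf.integrable_indicator hT), integral_indicator hT]
        rfl
    _ = ∫ y in Set.Ioc 0 t, ∫ v in Prod.mk y ⁻¹' cornerTriangle t, f y v ∂ν ∂μ := by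
        refine (setIntegral_eq_integral_of_forall_compl_eq_zero fun y hy => ?_).symm
        rw [prodMk_preimage_cornerTriangle_of_notMem hy, setIntegral_empty]
    _ = ∫ y in (0:ℝ)..t, ∫ v in (0:ℝ)..(t - y), f y v ∂ν ∂μ := by
        rw [intervalIntegral.integral_of_le ht]
        refine setIntegral_congr_fun measurableSet_Ioc fun y hy => ?_
        simp only [prodMk_preimage_cornerTriangle_of_pos t hy.1,
          intervalIntegral.integral_of_le (sub_nonneg.2 hy.2)]

theorem integral_integral_sub_swap_of_nonneg [SFinite μ] [SFinite ν] (ht : 0 ≤ t)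
    (hf : IntegrableOn (Function.uncurry f) (cornerTriangle t) (μ.prod ν)) :
    ∫ y in (0:ℝ)..t, ∫ v in (0:ℝ)..(t - y), f y v ∂ν ∂μ =
      ∫ v in (0:ℝ)..t, ∫ y in (0:ℝ)..(t - v), f y v ∂μ ∂ν := by
  have swap_preserving : MeasurePreserving Prod.swap (ν.prod μ) (μ.prod ν) :=
    Measure.measurePreserving_swap
  have swap_embedding : MeasurableEmbedding (Prod.swap : ℝ × ℝ → ℝ × ℝ) :=
    MeasurableEquiv.prodComm.measurableEmbedding
  have hf_swap : IntegrableOn (Function.uncurry fun v y => f y v) (cornerTriangle t)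
      (ν.prod μ) := by
    rw [← swap_preimage_cornerTriangle]
    exact (swap_preserving.integrableOn_comp_preimage swap_embedding).2 hf
  rw [← setIntegral_cornerTriangle ht hf, ← setIntegral_cornerTriangle ht hf_swap,
    ← swap_preserving.setIntegral_preimage_emb swap_embedding, swap_preimage_cornerTriangle]
  rfl

theorem integral_integral_sub_comp_neg (f : ℝ → ℝ → E) (t : ℝ) :
    ∫ y in (0:ℝ)..-t, ∫ v in (0:ℝ)..(-t - y), f (-y) (-v) =
      ∫ y in (0:ℝ)..t, ∫ v in (0:ℝ)..(t - y), f y v := by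
  have inner_integral (y : ℝ) : ∫ v in (0:ℝ)..(-t - y), f (-y) (-v) =
      -∫ v in (0:ℝ)..(t - -y), f (-y) v := by
    rw [intervalIntegral.integral_comp_neg, neg_zero, intervalIntegral.integral_symm]
    ring_nf
  simp only [inner_integral, intervalIntegral.integral_neg]
  rw [intervalIntegral.integral_comp_neg fun y => ∫ v in (0:ℝ)..(t - y), f y v, neg_neg, neg_zero,
    ← intervalIntegral.integral_symm]

theorem integral_integral_sub_swap (hf : Continuous (Function.uncurry f)) (t : ℝ) :
    ∫ y in (0:ℝ)..t, ∫ v in (0:ℝ)..(t - y), f y v =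
      ∫ v in (0:ℝ)..t, ∫ y in (0:ℝ)..(t - v), f y v := by
  have swap_of_nonneg {g : ℝ → ℝ → E} (hg : Continuous (Function.uncurry g)) {s : ℝ}
      (hs : 0 ≤ s) : ∫ y in (0:ℝ)..s, ∫ v in (0:ℝ)..(s - y), g y v =
        ∫ v in (0:ℝ)..s, ∫ y in (0:ℝ)..(s - v), g y v :=
    integral_integral_sub_swap_of_nonneg hs <|
      (hg.continuousOn.integrableOn_compact (isCompact_Icc.prod isCompact_Icc)).mono_set
        (cornerTriangle_subset_Icc_prod_Icc s)
  rcases le_total 0 t with ht | ht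
  · exact swap_of_nonneg hf ht
  · rw [← integral_integral_sub_comp_neg f, ← integral_integral_sub_comp_neg fun v y => f y v]
    have hf_neg : Continuous (Function.uncurry fun y v => f (-y) (-v)) :=
      hf.comp (continuous_neg (G := ℝ × ℝ))
    exact swap_of_nonneg hf_neg (neg_nonneg.2 ht)

end CornerTriangle

theorem integral_mul_integral_mul_comp_sub_comm {𝕜 : Type*} [RCLike 𝕜] {f g h : ℝ → 𝕜}
    (hf : Continuous f) (hg : Continuous g) (hh : Continuous h) (t : ℝ) :
    ∫ y in (0:ℝ)..t, f y * ∫ v in (0:ℝ)..(t - y), g v * h (t - y - v) =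
      ∫ y in (0:ℝ)..t, g y * ∫ v in (0:ℝ)..(t - y), f v * h (t - y - v) := by
  simp only [← intervalIntegral.integral_const_mul]
  rw [integral_integral_sub_swap (by fun_prop)]
  simp only [mul_left_comm (f _) (g _), sub_right_comm]

theorem stmt_8_general (t lam Θ Δ : ℝ) : frakB t lam Θ Δ = frakB t lam Δ Θ :=
  congrArg (lam ^ 2 * ·) <| integral_mul_integral_mul_comp_sub_comm
    (f := fun y => exp (-((lam + Θ) * y))) (g := fun v => exp (-((lam + Δ) * v)))
    (h := fun w => (lam * w + 2) ^ 2 - 2) (by fun_prop) (by fun_prop) (by fun_prop) t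

theorem stmt_8 (t lam Θ Δ : ℝ) (ht : 0 ≤ t) :
    frakB t lam Θ Δ = frakB t lam Δ Θ :=
  stmt_8_general t lam Θ Δ
end

section
/- For all real λ > 0 and β ≥ 0, the quantity 𝔅(t,λ,β,β)/t − t·λ⁴/(β+λ)² tends to 4βλ³/(β+λ)³ as t → ∞. -/
open MeasureTheory Real Filter

/-!
Up to the factor `λ²`, `𝔅` is obtained from the quadratic `(λ s + 2)² - 2` by two successive
convolutions with exponential kernels `exp (-a y)`, `a > 0`. Such a convolution inverts
`P ↦ a P + P'` up to a decaying term and preserves bounded errors, so it maps `p s² + q s + O(1)` to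
`(p / a) s² + (q / a - 2 p / a²) s + O(1)`. Applying this rule twice gives the first two
coefficients of `𝔅`.
-/

section ExpConv

variable {E : Type*} [NormedAddCommGroup E] [NormedSpace ℝ E] {a t : ℝ} {f g : ℝ → E}

/-- The convolution on `[0, t]` of `f` with the exponential kernel `y ↦ exp (-a y)`. -/
noncomputable def expConv (a : ℝ) (f : ℝ → E) (t : ℝ) : E :=
  ∫ y in (0:ℝ)..t, exp (-(a * y)) • f (t - y)

theorem continuous_expConv (a : ℝ) (hf : Continuous f) : Continuous (expConv a f) :=
  intervalIntegral.continuous_parametric_intervalIntegral_of_continuous (by fun_prop) continuous_id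

theorem expConv_sub (a t : ℝ) (hf : Continuous f) (hg : Continuous g) :
    expConv a (fun s => f s - g s) t = expConv a f t - expConv a g t := by
  simp only [expConv, smul_sub]
  exact intervalIntegral.integral_sub (Continuous.intervalIntegrable (by fun_prop) _ _)
    (Continuous.intervalIntegrable (by fun_prop) _ _)

theorem expConv_smul_add_deriv [CompleteSpace E] (a t : ℝ) {P P' : ℝ → E}
    (hP : ∀ s, HasDerivAt P (P' s) s) (hP' : Continuous P') :
    expConv a (fun s => a • P s + P' s) t = P t - exp (-(a * t)) • P 0 := by
  have hPcont : Continuous P := continuous_iff_continuousAt.2 fun s => (hP s).continuousAt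
  have hderiv (y : ℝ) : HasDerivAt (fun y => -(exp (-(a * y)) • P (t - y)))
      (exp (-(a * y)) • (a • P (t - y) + P' (t - y))) y := by
    have hexp : HasDerivAt (fun y => exp (-(a * y))) (exp (-(a * y)) * -(a * 1)) y :=
      ((hasDerivAt_id y).const_mul a).neg.exp
    have hreflect : HasDerivAt (fun y => P (t - y)) (-P' (t - y)) y := (hP _).comp_const_sub t y
    exact (hexp.smul hreflect).neg.congr_deriv (by module)
  rw [expConv, intervalIntegral.integral_eq_sub_of_hasDerivAt (fun y _ => hderiv y)
    (Continuous.intervalIntegrable (by fun_prop) _ _)]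
  simp only [sub_self, sub_zero, mul_zero, neg_zero, exp_zero, one_smul]
  abel

theorem expConv_const [CompleteSpace E] (ha : a ≠ 0) (t : ℝ) (c : E) :
    expConv a (fun _ => c) t = ((1 - exp (-(a * t))) / a) • c := by
  have h := expConv_smul_add_deriv a t (fun s => hasDerivAt_const s (a⁻¹ • c)) continuous_const
  simp only [smul_inv_smul₀ ha, add_zero] at h
  rw [h]
  module

theorem norm_expConv_le {M : ℝ} (ha : 0 < a) (ht : 0 ≤ t) (hf : ∀ s, 0 ≤ s → ‖f s‖ ≤ M) :
    ‖expConv a f t‖ ≤ M / a := by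
  have hM : 0 ≤ M := (norm_nonneg _).trans (hf 0 le_rfl)
  calc
    ‖expConv a f t‖ ≤ expConv a (fun _ => M) t := by
      refine intervalIntegral.norm_integral_le_of_norm_le ht (.of_forall fun y hy => ?_)
        (Continuous.intervalIntegrable (by fun_prop) _ _)
      rw [norm_smul, norm_of_nonneg (exp_pos _).le, smul_eq_mul]
      gcongr
      exact hf _ (sub_nonneg.2 hy.2)
    _ = (1 - exp (-(a * t))) * M / a := by rw [expConv_const ha.ne', smul_eq_mul]; ring
    _ ≤ M / a := by
      gcongr
      exact mul_le_of_le_one_left hM (sub_le_self _ (exp_pos _).le)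

end ExpConv

section QuadraticExpansion

variable {E : Type*} [NormedAddCommGroup E] [NormedSpace ℝ E] {f : ℝ → E} {p q : E}

/-- The expansion `f s = s² p + s q + O(1)`, with an error that is bounded on all of `[0, ∞)`
(not only near infinity), so that it can be integrated from `0`. -/
def HasQuadraticExpansion (f : ℝ → E) (p q : E) : Prop :=
  ∃ M : ℝ, ∀ s, 0 ≤ s → ‖f s - (s ^ 2 • p + s • q)‖ ≤ M

namespace HasQuadraticExpansion

theorem const_smul (h : HasQuadraticExpansion f p q) (c : ℝ) :
    HasQuadraticExpansion (fun s => c • f s) (c • p) (c • q) := by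
  obtain ⟨M, hM⟩ := h
  refine ⟨‖c‖ * M, fun s hs => ?_⟩
  calc
    ‖c • f s - (s ^ 2 • c • p + s • c • q)‖ = ‖c‖ * ‖f s - (s ^ 2 • p + s • q)‖ := by
      rw [← norm_smul]; congr 1; module
    _ ≤ ‖c‖ * M := by gcongr; exact hM s hs

protected theorem expConv [CompleteSpace E] {a : ℝ} (ha : 0 < a) (hf : Continuous f)
    (h : HasQuadraticExpansion f p q) :
    HasQuadraticExpansion (expConv a f) (a⁻¹ • p) (a⁻¹ • q - (2 / a ^ 2) • p) := by
  obtain ⟨M, hM⟩ := h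
  set q' : E := a⁻¹ • q - (2 / a ^ 2) • p with hq'
  let P (s : ℝ) : E := s ^ 2 • a⁻¹ • p + s • q'
  let P' (s : ℝ) : E := (2 * s) • a⁻¹ • p + q'
  have hP (s : ℝ) : HasDerivAt P (P' s) s := by
    simpa using
      ((hasDerivAt_pow 2 s).smul_const (a⁻¹ • p)).fun_add ((hasDerivAt_id s).smul_const q')
  have hPP' (s : ℝ) : a • P s + P' s = s ^ 2 • p + s • q + q' := by
    simp only [P, P', hq']
    match_scalars <;> field_simp
    ring
  have hbound (s : ℝ) (hs : 0 ≤ s) : ‖f s - (a • P s + P' s)‖ ≤ M + ‖q'‖ := by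
    rw [hPP', ← sub_sub]
    exact (norm_sub_le _ _).trans (by gcongr; exact hM s hs)
  refine ⟨(M + ‖q'‖) / a, fun t ht => ?_⟩
  have hsub : expConv a (fun s => f s - (a • P s + P' s)) t = expConv a f t - P t := by
    rw [expConv_sub a t hf (by fun_prop), expConv_smul_add_deriv a t hP (by fun_prop)]
    simp [P]
  exact hsub ▸ norm_expConv_le ha ht hbound

theorem tendsto_inv_smul_sub (h : HasQuadraticExpansion f p q) :
    Tendsto (fun t : ℝ => t⁻¹ • f t - t • p) atTop (nhds q) := by
  obtain ⟨M, hM⟩ := h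
  have hbdd : IsBoundedUnder (· ≤ ·) atTop fun t : ℝ => ‖f t - (t ^ 2 • p + t • q)‖ :=
    isBoundedUnder_of_eventually_le ((eventually_ge_atTop 0).mono hM)
  have herror := (tendsto_inv_atTop_zero (𝕜 := ℝ)).zero_smul_isBoundedUnder_le hbdd
  refine (zero_add q ▸ herror.add_const q).congr' ?_
  filter_upwards [eventually_ne_atTop 0] with t ht
  match_scalars <;> field_simp
  ring

end HasQuadraticExpansion

end QuadraticExpansion

theorem frakB_eq_expConv (t lam Θ Δ : ℝ) :
    frakB t lam Θ Δ =
      lam ^ 2 * expConv (lam + Θ) (expConv (lam + Δ) fun s => (lam * s + 2) ^ 2 - 2) t :=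
  rfl

theorem hasQuadraticExpansion_affine_sq_sub (b c d : ℝ) :
    HasQuadraticExpansion (fun s => (b * s + c) ^ 2 - d) (b ^ 2) (2 * b * c) :=
  ⟨‖c ^ 2 - d‖, fun s _ => le_of_eq (by simp only [smul_eq_mul]; ring_nf)⟩

theorem stmt_9_general (lam Θ Δ : ℝ) (hΘ : 0 < Θ + lam) (hΔ : 0 < Δ + lam) :
    Tendsto (fun t : ℝ => frakB t lam Θ Δ / t - t * lam ^ 4 / ((Θ + lam) * (Δ + lam))) atTop
      (nhds (2 * lam ^ 3 * (Θ / (Θ + lam) + Δ / (Δ + lam)) / ((Θ + lam) * (Δ + lam)))) := by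
  have hinner := (hasQuadraticExpansion_affine_sq_sub lam 2 2).expConv hΔ (by fun_prop)
  have houter := hinner.expConv hΘ (continuous_expConv _ (by fun_prop))
  convert (houter.const_smul (lam ^ 2)).tendsto_inv_smul_sub using 2
  · rw [frakB_eq_expConv, add_comm lam Θ, add_comm lam Δ]
    simp only [smul_eq_mul]
    field_simp
  · simp only [smul_eq_mul]
    field_simp
    ring

theorem stmt_9 (lam β : ℝ) (hlam : 0 < lam) (hβ : 0 ≤ β) :
    Tendsto (fun t : ℝ => frakB t lam β β / t - t * lam ^ 4 / (β + lam) ^ 2) atTop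
      (nhds (4 * β * lam ^ 3 / (β + lam) ^ 3)) := by
  have hpos : 0 < β + lam := by positivity
  convert stmt_9_general lam β β hpos hpos using 2 <;> field_simp
  ring
end

section
/- Let n and j be natural numbers with 3 ≤ j ≤ n, let t ≥ 0, and let f, g : ℝ → [0,∞] be Borel measurable. Then (n!/((j−3)!·(n−j)!)) · ∫₀ᵗ ∫ᵧᵗ ∫₀^{t−w} f(y)·g(v)·(w−y)^{j−3}·(t−w−v)^{n−j} dv dw dy = n·(n−1) · ∫₀ᵗ ∫₀^{t−y} f(y)·g(v)·(t−y−v)^{n−2} dv dy, where both sides are computed as Lebesgue integrals of nonnegative functions (values in [0,∞] allowed) and the middle integral on the left is over w ∈ [y,t]. -/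
open MeasureTheory Real ENNReal

/-!
For fixed `y`, Tonelli's theorem carries the `w`-integral inside the `v`-integral, over
`y < w ≤ t - v`, where the two power kernels form a Beta integral:
`∫ (w - y) ^ (p - 1) * (t - v - w) ^ (q - 1) dw = B(p, q) * (t - v - y) ^ (p + q - 1)`.
This is the semigroup law `I^p ∘ I^q = I^(p + q)` of the Riemann–Liouville fractional integrals,
and it holds for all real `p, q > 0`. The factorials come from
`B(j - 2, n - j + 1) = (j - 3)! * (n - j)! / (n - 2)!`.
-/

section Swap

variable {α β : Type*} [MeasurableSpace α] [MeasurableSpace β] {μ : Measure α} {ν : Measure β}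

lemma setLIntegral_setLIntegral_eq_lintegral_indicator {s : Set α} {t : α → Set β}
    (hs : MeasurableSet s) (ht : ∀ x, MeasurableSet (t x)) (f : α → β → ℝ≥0∞) :
    ∫⁻ x in s, ∫⁻ y in t x, f x y ∂ν ∂μ
      = ∫⁻ x, ∫⁻ y, {z : α × β | z.1 ∈ s ∧ z.2 ∈ t z.1}.indicator (Function.uncurry f) (x, y)
          ∂ν ∂μ := by
  rw [← lintegral_indicator hs]
  refine lintegral_congr fun x => ?_
  by_cases hx : x ∈ s
  · rw [Set.indicator_of_mem hx, ← lintegral_indicator (ht x)]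
    refine lintegral_congr fun y => ?_
    by_cases hy : y ∈ t x <;> simp [hx, hy]
  · simp [hx]

lemma setLIntegral_setLIntegral_swap [SFinite μ] [SFinite ν] {s : Set α} {t : α → Set β}
    {s' : Set β} {t' : β → Set α} (hst : ∀ x y, x ∈ s ∧ y ∈ t x ↔ y ∈ s' ∧ x ∈ t' y)
    (hs : MeasurableSet s) (ht : ∀ x, MeasurableSet (t x)) (hs' : MeasurableSet s')
    (ht' : ∀ y, MeasurableSet (t' y)) (hS : MeasurableSet {z : α × β | z.1 ∈ s ∧ z.2 ∈ t z.1})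
    {f : α → β → ℝ≥0∞} (hf : AEMeasurable (Function.uncurry f) (μ.prod ν)) :
    ∫⁻ x in s, ∫⁻ y in t x, f x y ∂ν ∂μ = ∫⁻ y in s', ∫⁻ x in t' y, f x y ∂μ ∂ν := by
  rw [setLIntegral_setLIntegral_eq_lintegral_indicator hs ht,
    setLIntegral_setLIntegral_eq_lintegral_indicator hs' ht', lintegral_lintegral_swap]
  · refine lintegral_congr fun y => lintegral_congr fun x => ?_
    by_cases hxy : y ∈ s' ∧ x ∈ t' y <;> simp [hxy, hst]
  · exact hf.indicator hS

lemma setLIntegral_Ioc_setLIntegral_Ioc_sub_swap {μ ν : Measure ℝ} [SFinite μ] [SFinite ν]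
    (y s t : ℝ) {f : ℝ → ℝ → ℝ≥0∞} (hf : AEMeasurable (Function.uncurry f) (μ.prod ν)) :
    ∫⁻ w in Set.Ioc y (t - s), ∫⁻ v in Set.Ioc s (t - w), f w v ∂ν ∂μ
      = ∫⁻ v in Set.Ioc s (t - y), ∫⁻ w in Set.Ioc y (t - v), f w v ∂μ ∂ν := by
  refine setLIntegral_setLIntegral_swap (fun w v => ?_) measurableSet_Ioc
    (fun _ => measurableSet_Ioc) measurableSet_Ioc (fun _ => measurableSet_Ioc) ?_ hf
  · simp only [Set.mem_Ioc]
    constructor <;> rintro ⟨⟨_, _⟩, _, _⟩ <;> refine ⟨⟨?_, ?_⟩, ?_, ?_⟩ <;> linarith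
  · simp only [Set.mem_Ioc]
    measurability

end Swap

section Beta

open ProbabilityTheory (beta beta_pos betaPDF lintegral_betaPDF lintegral_betaPDF_eq_one)

variable {p q : ℝ}

lemma setLIntegral_Ioo_zero_one_rpow_mul_rpow (hp : 0 < p) (hq : 0 < q) :
    ∫⁻ x in Set.Ioo (0 : ℝ) 1, ENNReal.ofReal (x ^ (p - 1) * (1 - x) ^ (q - 1))
      = ENNReal.ofReal (beta p q) := by
  have hB := beta_pos hp hq
  calc ∫⁻ x in Set.Ioo (0 : ℝ) 1, ENNReal.ofReal (x ^ (p - 1) * (1 - x) ^ (q - 1))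
    _ = ∫⁻ x in Set.Ioo (0 : ℝ) 1, ENNReal.ofReal (beta p q) *
          ENNReal.ofReal (1 / beta p q * x ^ (p - 1) * (1 - x) ^ (q - 1)) := by
      refine lintegral_congr fun x => ?_
      rw [← ENNReal.ofReal_mul hB.le]
      congr 1
      field_simp
    _ = ENNReal.ofReal (beta p q) * ∫⁻ x, betaPDF p q x := by
      rw [lintegral_const_mul' _ _ ENNReal.ofReal_ne_top, lintegral_betaPDF]
    _ = ENNReal.ofReal (beta p q) := by
      rw [lintegral_betaPDF_eq_one hp hq, mul_one]

lemma setLIntegral_Ioo_comp_affine {y c : ℝ} (hyc : y < c) (F : ℝ → ℝ≥0∞) :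
    ∫⁻ w in Set.Ioo y c, F w
      = ENNReal.ofReal (c - y) * ∫⁻ x in Set.Ioo (0 : ℝ) 1, F ((c - y) * x + y) := by
  have hpos : 0 < c - y := sub_pos.2 hyc
  have himage : ((c - y) * · + y) '' Set.Ioo (0 : ℝ) 1 = Set.Ioo y c := by
    simp [Set.image_affine_Ioo hpos]
  have hderiv (x : ℝ) : HasDerivAt ((c - y) * · + y) (c - y) x := by
    simpa using ((hasDerivAt_id x).const_mul (c - y)).add_const y
  have hinj : Function.Injective ((c - y) * · + y) :=
    (add_left_injective y).comp (mul_right_injective₀ hpos.ne')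
  rw [← himage, lintegral_image_eq_lintegral_abs_deriv_mul measurableSet_Ioo
    (fun x _ => (hderiv x).hasDerivWithinAt) hinj.injOn, abs_of_pos hpos,
    lintegral_const_mul' _ _ ENNReal.ofReal_ne_top]

lemma setLIntegral_Ioc_sub_rpow_mul_sub_rpow (hp : 0 < p) (hq : 0 < q) {y c : ℝ} (hyc : y < c) :
    ∫⁻ w in Set.Ioc y c, ENNReal.ofReal ((w - y) ^ (p - 1) * (c - w) ^ (q - 1))
      = ENNReal.ofReal (beta p q) * ENNReal.ofReal ((c - y) ^ (p + q - 1)) := by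
  have hpos : 0 < c - y := sub_pos.2 hyc
  have hscale : ∀ x ∈ Set.Ioo (0 : ℝ) 1,
      ENNReal.ofReal (((c - y) * x + y - y) ^ (p - 1) * (c - ((c - y) * x + y)) ^ (q - 1))
        = ENNReal.ofReal ((c - y) ^ (p - 1) * (c - y) ^ (q - 1))
          * ENNReal.ofReal (x ^ (p - 1) * (1 - x) ^ (q - 1)) := by
    rintro x ⟨hx0, hx1⟩
    rw [← ENNReal.ofReal_mul (by positivity), add_sub_cancel_right,
      show c - ((c - y) * x + y) = (c - y) * (1 - x) by ring,
      mul_rpow hpos.le hx0.le, mul_rpow hpos.le (sub_nonneg.2 hx1.le)]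
    congr 1
    ring
  have hexp : (c - y) * ((c - y) ^ (p - 1) * (c - y) ^ (q - 1)) = (c - y) ^ (p + q - 1) := by
    rw [← rpow_add hpos, mul_comm, ← rpow_add_one hpos.ne']
    congr 1
    ring
  rw [← setLIntegral_congr Ioo_ae_eq_Ioc, setLIntegral_Ioo_comp_affine hyc,
    setLIntegral_congr_fun measurableSet_Ioo hscale, lintegral_const_mul' _ _ ENNReal.ofReal_ne_top,
    setLIntegral_Ioo_zero_one_rpow_mul_rpow hp hq, ← mul_assoc, ← ENNReal.ofReal_mul hpos.le, hexp,
    mul_comm]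

lemma beta_natCast_add_one (a b : ℕ) :
    beta (a + 1) (b + 1) = a.factorial * b.factorial / (a + b + 1).factorial := by
  rw [beta, Gamma_nat_eq_factorial, Gamma_nat_eq_factorial, ← Gamma_nat_eq_factorial (a + b + 1)]
  congr 2
  push_cast
  ring

lemma setLIntegral_Ioc_setLIntegral_Ioc_mul_rpow_mul_rpow (hp : 0 < p) (hq : 0 < q) (y s t : ℝ)
    {g : ℝ → ℝ≥0∞} (hg : Measurable g) :
    ∫⁻ w in Set.Ioc y (t - s), ∫⁻ v in Set.Ioc s (t - w),
        g v * ENNReal.ofReal ((w - y) ^ (p - 1) * (t - w - v) ^ (q - 1))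
      = ENNReal.ofReal (beta p q) * ∫⁻ v in Set.Ioc s (t - y),
          g v * ENNReal.ofReal ((t - y - v) ^ (p + q - 1)) := by
  have hmeas : Measurable (Function.uncurry fun w v : ℝ =>
      g v * ENNReal.ofReal ((w - y) ^ (p - 1) * (t - w - v) ^ (q - 1))) := by
    unfold Function.uncurry
    fun_prop
  -- At `v = t - y` the `w`-range is empty, but `0 ^ (p + q - 1) = 1` when `p + q = 1`.
  rw [setLIntegral_Ioc_setLIntegral_Ioc_sub_swap y s t hmeas.aemeasurable,
    ← lintegral_const_mul' _ _ ENNReal.ofReal_ne_top,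
    ← setLIntegral_congr Ioo_ae_eq_Ioc, ← setLIntegral_congr Ioo_ae_eq_Ioc]
  refine setLIntegral_congr_fun measurableSet_Ioo fun v hv => ?_
  simp only [sub_right_comm t _ v]
  rw [lintegral_const_mul _ (by fun_prop),
    setLIntegral_Ioc_sub_rpow_mul_sub_rpow hp hq (lt_sub_comm.1 hv.2), mul_left_comm]

theorem stmt_16_general (hp : 0 < p) (hq : 0 < q) (t : ℝ) (f : ℝ → ℝ≥0∞) {g : ℝ → ℝ≥0∞}
    (hg : Measurable g) :
    ∫⁻ y in Set.Ioc (0 : ℝ) t, ∫⁻ w in Set.Ioc y t, ∫⁻ v in Set.Ioc (0 : ℝ) (t - w),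
        f y * g v * ENNReal.ofReal ((w - y) ^ (p - 1) * (t - w - v) ^ (q - 1))
      = ENNReal.ofReal (beta p q) *
          ∫⁻ y in Set.Ioc (0 : ℝ) t, ∫⁻ v in Set.Ioc (0 : ℝ) (t - y),
            f y * g v * ENNReal.ofReal ((t - y - v) ^ (p + q - 1)) := by
  rw [← lintegral_const_mul' _ _ ENNReal.ofReal_ne_top]
  refine lintegral_congr fun y => ?_
  simpa only [sub_zero] using
    setLIntegral_Ioc_setLIntegral_Ioc_mul_rpow_mul_rpow hp hq y 0 t (hg.const_mul (f y))

lemma setLIntegral_mul_pow_mul_pow_eq (a b : ℕ) (t : ℝ) (f : ℝ → ℝ≥0∞) {g : ℝ → ℝ≥0∞}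
    (hg : Measurable g) :
    ∫⁻ y in Set.Ioc (0 : ℝ) t, ∫⁻ w in Set.Ioc y t, ∫⁻ v in Set.Ioc (0 : ℝ) (t - w),
        f y * g v * ENNReal.ofReal ((w - y) ^ a * (t - w - v) ^ b)
      = (a.factorial * b.factorial : ℝ≥0∞) / (a + b + 1).factorial *
          ∫⁻ y in Set.Ioc (0 : ℝ) t, ∫⁻ v in Set.Ioc (0 : ℝ) (t - y),
            f y * g v * ENNReal.ofReal ((t - y - v) ^ (a + b + 1)) := by
  have hexp : (a + 1 + (b + 1) - 1 : ℝ) = (a + b + 1 : ℕ) := by push_cast; ring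
  have hbeta : ENNReal.ofReal (beta (a + 1) (b + 1))
      = (a.factorial * b.factorial : ℝ≥0∞) / (a + b + 1).factorial := by
    rw [beta_natCast_add_one, ENNReal.ofReal_div_of_pos (by positivity),
      ENNReal.ofReal_mul (by positivity)]
    simp only [ENNReal.ofReal_natCast]
  have h := stmt_16_general (p := a + 1) (q := b + 1) (by positivity) (by positivity) t f hg
  simpa only [add_sub_cancel_right, hexp, hbeta, Real.rpow_natCast] using h

end Beta

lemma factorial_div_mul_div_factorial_sub_two {n : ℕ} (hn : 2 ≤ n) {c : ℝ≥0∞} (hc : c ≠ 0)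
    (hc' : c ≠ ∞) : (n.factorial : ℝ≥0∞) / c * (c / (n - 2).factorial) = n * (n - 1 : ℕ) := by
  have hfact : n.factorial = n * (n - 1) * (n - 2).factorial := by
    rw [mul_assoc, ← Nat.mul_factorial_pred (by lia : n ≠ 0),
      ← Nat.mul_factorial_pred (by lia : n - 1 ≠ 0), Nat.sub_sub]
  rw [← mul_div_assoc, ENNReal.div_mul_cancel hc hc', hfact]
  push_cast
  exact ENNReal.mul_div_cancel_right (by positivity) (ENNReal.natCast_ne_top _)

theorem stmt_16 (n j : ℕ) (hj : 3 ≤ j) (hjn : j ≤ n) (t : ℝ) (ht : 0 ≤ t)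
    (f g : ℝ → ℝ≥0∞) (hf : Measurable f) (hg : Measurable g) :
    ((n.factorial : ℝ≥0∞) / ((j - 3).factorial * (n - j).factorial)) *
        ∫⁻ y in Set.Ioc (0:ℝ) t,
          ∫⁻ w in Set.Ioc y t,
            ∫⁻ v in Set.Ioc (0:ℝ) (t - w),
              f y * g v * ENNReal.ofReal ((w - y) ^ (j - 3) * (t - w - v) ^ (n - j))
      = (n : ℝ≥0∞) * (n - 1 : ℕ) *
          ∫⁻ y in Set.Ioc (0:ℝ) t,
            ∫⁻ v in Set.Ioc (0:ℝ) (t - y),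
              f y * g v * ENNReal.ofReal ((t - y - v) ^ (n - 2)) := by
  rw [setLIntegral_mul_pow_mul_pow_eq _ _ t f hg, ← mul_assoc,
    show j - 3 + (n - j) + 1 = n - 2 by lia,
    factorial_div_mul_div_factorial_sub_two (by lia) (by positivity) (by finiteness)]
end

section
/- Let L be a Borel probability measure on (0,∞), let t > 0, and for each natural number i ≥ 1 let Δᵢ : ℝ → [0,∞] be Borel measurable. For each n ≥ 0 set π_{t,n} := ∫ ((λt)ⁿ/n!)·exp(−λt) dL(λ). Then ∑_{n=1}^{∞} π_{t,n} · (n/tⁿ) · ∫₀ᵗ ( ∑_{i=1}^{n} Δᵢ(v) ) · (t−v)^{n−1} dv = ∫_{(0,∞)} ∫₀ᵗ λ·exp(−λv) · ( ∑_{n=0}^{∞} exp(−λ(t−v))·((λ(t−v))ⁿ/n!) · ∑_{i=1}^{n+1} Δᵢ(v) ) dv dL(λ), where both sides are computed in [0,∞] (Lebesgue integrals and sums of nonnegative terms). -/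
open MeasureTheory Real ENNReal

/-!
Conditionally on the rate `λ`, the jumps form a Poisson process. The density at `v` of its first
jump, times the probability of `n` further jumps in `(v, t]`, equals the probability of `n + 1`
jumps in `(0, t]` times the density `(n + 1) (t - v) ^ n / t ^ (n + 1)` at `v` of the minimum of
`n + 1` independent uniform points of `(0, t)`. The rate enters the latter product only through the
Poisson weight, so Tonelli's theorem separates the integrals over `λ` and `v`.
-/

theorem exponential_mul_poisson_eq_poisson_mul_min_uniform {t : ℝ} (ht : t ≠ 0) (lam v : ℝ)
    (n : ℕ) :
    lam * exp (-(lam * v)) * (exp (-(lam * (t - v))) * (lam * (t - v)) ^ n / n.factorial) =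
      (lam * t) ^ (n + 1) / (n + 1).factorial * exp (-(lam * t)) *
        ((n + 1 : ℕ) / t ^ (n + 1)) * (t - v) ^ n := by
  have exp_split : exp (-(lam * t)) = exp (-(lam * v)) * exp (-(lam * (t - v))) := by
    rw [← exp_add]
    ring_nf
  rw [exp_split, Nat.factorial_succ, mul_pow, mul_pow]
  push_cast
  field_simp
  ring

-- For `t < v` and odd `n`, `ENNReal.ofReal` truncates a negative factor to `0` on both sides.
theorem ofReal_exponential_mul_ofReal_poisson {t lam : ℝ} (ht : 0 < t) (hlam : 0 ≤ lam) (v : ℝ)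
    (n : ℕ) :
    ENNReal.ofReal (lam * exp (-(lam * v))) *
        ENNReal.ofReal (exp (-(lam * (t - v))) * (lam * (t - v)) ^ n / n.factorial) =
      ENNReal.ofReal ((lam * t) ^ (n + 1) / (n + 1).factorial * exp (-(lam * t))) *
        (((n + 1 : ℕ) : ℝ≥0∞) / ENNReal.ofReal (t ^ (n + 1))) *
          ENNReal.ofReal ((t - v) ^ n) := by
  rw [← ENNReal.ofReal_mul (by positivity),
    exponential_mul_poisson_eq_poisson_mul_min_uniform ht.ne',
    ENNReal.ofReal_mul (by positivity), ENNReal.ofReal_mul (by positivity),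
    ENNReal.ofReal_div_of_pos (by positivity), ENNReal.ofReal_natCast]

theorem lintegral_tsum_const_mul {α ι : Type*} [MeasurableSpace α] [Countable ι] {μ : Measure α}
    (c : ι → ℝ≥0∞) {f : ι → α → ℝ≥0∞} (hf : ∀ i, AEMeasurable (f i) μ) :
    ∫⁻ x, ∑' i, c i * f i x ∂μ = ∑' i, c i * ∫⁻ x, f i x ∂μ := by
  rw [lintegral_tsum fun i => (hf i).const_mul (c i)]
  exact tsum_congr fun i => lintegral_const_mul'' (c i) (hf i)

theorem lintegral_exponential_mul_tsum_poisson {t lam : ℝ} (ht : 0 < t) (hlam : 0 ≤ lam)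
    {ν : Measure ℝ} {S : ℕ → ℝ → ℝ≥0∞} (hS : ∀ n, AEMeasurable (S n) ν) :
    ∫⁻ v, ENNReal.ofReal (lam * exp (-(lam * v))) *
        ∑' n : ℕ, ENNReal.ofReal
          (exp (-(lam * (t - v))) * (lam * (t - v)) ^ n / n.factorial) * S n v ∂ν =
      ∑' n : ℕ,
        ENNReal.ofReal ((lam * t) ^ (n + 1) / (n + 1).factorial * exp (-(lam * t))) *
          (((n + 1 : ℕ) : ℝ≥0∞) / ENNReal.ofReal (t ^ (n + 1))) *
            ∫⁻ v, S n v * ENNReal.ofReal ((t - v) ^ n) ∂ν := by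
  rw [← lintegral_tsum_const_mul _ fun n => by fun_prop]
  refine lintegral_congr fun v => ?_
  rw [← ENNReal.tsum_mul_left]
  refine tsum_congr fun n => ?_
  rw [← mul_assoc, ofReal_exponential_mul_ofReal_poisson ht hlam, mul_assoc, mul_comm (S n v)]

theorem stmt_19_general (L ν : Measure ℝ) {t : ℝ} (ht : 0 < t) (S : ℕ → ℝ → ℝ≥0∞)
    (hS : ∀ n, AEMeasurable (S n) (ν.restrict (Set.Ioc 0 t))) :
    ∑' n : ℕ,
        (∫⁻ lam in Set.Ioi (0 : ℝ),
            ENNReal.ofReal ((lam * t) ^ n / n.factorial * exp (-(lam * t))) ∂L) *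
          ((n : ℝ≥0∞) / ENNReal.ofReal (t ^ n)) *
            ∫⁻ v in Set.Ioc (0 : ℝ) t, S n v * ENNReal.ofReal ((t - v) ^ (n - 1)) ∂ν =
      ∫⁻ lam in Set.Ioi (0 : ℝ), ∫⁻ v in Set.Ioc (0 : ℝ) t,
        ENNReal.ofReal (lam * exp (-(lam * v))) *
          ∑' n : ℕ, ENNReal.ofReal
            (exp (-(lam * (t - v))) * (lam * (t - v)) ^ n / n.factorial) * S (n + 1) v ∂ν ∂L := by
  rw [setLIntegral_congr_fun measurableSet_Ioi fun lam (hlam : 0 < lam) =>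
      lintegral_exponential_mul_tsum_poisson ht hlam.le fun n => hS (n + 1),
    lintegral_tsum fun n => by fun_prop, tsum_eq_zero_add' ENNReal.summable]
  simp only [Nat.cast_zero, ENNReal.zero_div, mul_zero, zero_mul, zero_add, Nat.add_sub_cancel]
  refine tsum_congr fun n => ?_
  rw [lintegral_mul_const _ (by fun_prop), lintegral_mul_const _ (by fun_prop)]

theorem stmt_19 (L : Measure ℝ) [IsProbabilityMeasure L] (hsupp : L (Set.Iic 0) = 0)
    (t : ℝ) (ht : 0 < t)
    (Δ : ℕ → ℝ → ℝ≥0∞) (hΔ : ∀ i, Measurable (Δ i)) :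
    ∑' n : ℕ,
        (∫⁻ lam in Set.Ioi (0:ℝ),
            ENNReal.ofReal ((lam * t) ^ n / n.factorial * Real.exp (-(lam * t))) ∂L) *
          ((n : ℝ≥0∞) / ENNReal.ofReal (t ^ n)) *
          ∫⁻ v in Set.Ioc (0:ℝ) t,
            (∑ i ∈ Finset.Icc 1 n, Δ i v) * ENNReal.ofReal ((t - v) ^ (n - 1))
      = ∫⁻ lam in Set.Ioi (0:ℝ),
          (∫⁻ v in Set.Ioc (0:ℝ) t,
            ENNReal.ofReal (lam * Real.exp (-(lam * v))) *
              ∑' n : ℕ,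
                ENNReal.ofReal
                    (Real.exp (-(lam * (t - v))) * (lam * (t - v)) ^ n / n.factorial) *
                  ∑ i ∈ Finset.Icc 1 (n + 1), Δ i v) ∂L :=
  stmt_19_general L volume ht (fun n v => ∑ i ∈ Finset.Icc 1 n, Δ i v) fun _ =>
    (Finset.measurable_fun_sum _ fun i _ => hΔ i).aemeasurable
end
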